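/- Let (G, u, v, U, V) be (3/2)-good (so δ = 2). Let x ∈ V and let y be a vertex not in U ∪ V, let G′ be the graph obtained from G by adding the edge xy, and suppose |U| + 1 > (3/2)|V| + 2. If z is an isolated vertex of G′, then the graph G″ obtained from G′ by adding the edge zu satisfies: (G″, u, v, U ∪ {y}, V ∪ {z}) is (3/2)-good. -/

import Mathlib

open SimpleGraph

/-- The graph obtained from `G` by adding the edge `xy`. -/
def addEdge {α : Type*} (G : SimpleGraph α) (x y : α) : SimpleGraph α :=
  G ⊔ SimpleGraph.fromEdgeSet {s(x, y)}

/-- `b_U = |V₁| + |U| − γ|V| − δ`, where `V₁ = V ∖ N_G(u)` and `δ = 1/(γ−1)`. -/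
noncomputable def bU {α : Type*} (γ : ℝ) (G : SimpleGraph α) (u : α) (U V : Set α) : ℝ :=
  ((V \ G.neighborSet u).ncard : ℝ) + U.ncard - γ * V.ncard - 1 / (γ - 1)

/-- `b_V = |U₁| + |V| − γ|U| − δ`, where `U₁ = U ∖ N_G(v)` and `δ = 1/(γ−1)`. -/
noncomputable def bV {α : Type*} (γ : ℝ) (G : SimpleGraph α) (v : α) (U V : Set α) : ℝ :=
  ((U \ G.neighborSet v).ncard : ℝ) + V.ncard - γ * U.ncard - 1 / (γ - 1)

/-- The tuple `(G, u, v, U, V)` is `γ`-good. -/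
def GammaGood {α : Type*} (γ : ℝ) (G : SimpleGraph α) (u v : α) (U V : Set α) : Prop :=
  G.Adj u v ∧ u ∈ U ∧ v ∈ V ∧ Disjoint U V ∧
  -- (1*): exactly one connected component contains an edge, its vertex set is `U ∪ V`,
  -- and it is bipartite with parts `U` and `V` (both independent sets)
  (∃! c : G.ConnectedComponent, ∃ x y, G.Adj x y ∧ G.connectedComponentMk x = c) ∧
  {w | G.connectedComponentMk w = G.connectedComponentMk u} = U ∪ V ∧
  (∀ a ∈ U, ∀ b ∈ U, ¬ G.Adj a b) ∧
  (∀ a ∈ V, ∀ b ∈ V, ¬ G.Adj a b) ∧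
  -- (2*): every vertex of `U ∪ V` has a neighbor in `U₀ ∪ V₀ = N(v) ∪ N(u)`
  (∀ w ∈ U ∪ V, ∃ z ∈ G.neighborSet v ∪ G.neighborSet u, G.Adj w z) ∧
  -- (3*) and (4*)
  bU γ G u U V ≤ 0 ∧ bV γ G v U V ≤ 0 ∧ bU γ G u U V + bV γ G v U V ≤ -2

/-!
As `|U| + 1` exceeds `γ|V| + δ`, the inequality `b_U ≤ 0` leaves room for `|V₁| < 1` only, so
`u` is adjacent to all of `V`. Hence `x` is a neighbor of `u`, and this is what condition (2*)
asks for at the new vertex `y`. The same excess gives `b_U > -1`, so `b_V < -1` by (4*).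
Passing to the new tuple adds at most `1 - γ` to `b_U`, since `z` is joined to `u`, and at most
`2 - γ` to `b_V`. The sum therefore increases by at most `3 - 2γ`, which is nonpositive exactly
for `γ ≥ 3/2`.
-/

lemma addEdge_adj_self {α : Type*} {G : SimpleGraph α} {a b : α} (hab : a ≠ b) :
    (addEdge G a b).Adj a b :=
  Or.inr ((edge_adj ..).2 ⟨Or.inl ⟨rfl, rfl⟩, hab⟩)

section Bipartition

variable {α : Type*} {G : SimpleGraph α} {S S' T T' : Set α} {a b : α}

lemma isBipartiteWith_mono (h : G.IsBipartiteWith S T) (hS : S ⊆ S') (hT : T ⊆ T')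
    (hdisj : Disjoint S' T') : G.IsBipartiteWith S' T' where
  disjoint := hdisj
  mem_of_adj _ _ hvw := (h.mem_of_adj hvw).imp (And.imp (@hS _) (@hT _)) (And.imp (@hT _) (@hS _))

lemma isBipartiteWith_addEdge (h : G.IsBipartiteWith S T) (ha : a ∈ S) (hb : b ∈ T) :
    (addEdge G a b).IsBipartiteWith S T where
  disjoint := h.disjoint
  mem_of_adj v w hvw := by
    obtain hvw | hvw := hvw
    · exact h.mem_of_adj hvw
    · obtain ⟨⟨rfl, rfl⟩ | ⟨rfl, rfl⟩, -⟩ := (edge_adj ..).1 hvw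
      exacts [Or.inl ⟨ha, hb⟩, Or.inr ⟨hb, ha⟩]

lemma isBipartiteWith_iff_support_subset :
    G.IsBipartiteWith S T ↔ Disjoint S T ∧ G.support ⊆ S ∪ T ∧
      (∀ a ∈ S, ∀ b ∈ S, ¬ G.Adj a b) ∧ (∀ a ∈ T, ∀ b ∈ T, ¬ G.Adj a b) := by
  constructor
  · intro h
    refine ⟨h.disjoint, isBipartiteWith_support_subset h, fun a ha b hb hab ↦ ?_,
      fun a ha b hb hab ↦ ?_⟩
    · exact h.disjoint.notMem_of_mem_left hb (h.mem_of_mem_adj ha hab)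
    · exact h.disjoint.notMem_of_mem_left (h.symm.mem_of_mem_adj ha hab) hb
  · rintro ⟨hdisj, hsupp, hS, hT⟩
    refine ⟨hdisj, fun a b hab ↦ ?_⟩
    obtain ha | ha := hsupp hab.mem_support_left <;> obtain hb | hb := hsupp hab.mem_support_right
    exacts [(hS a ha b hb hab).elim, Or.inl ⟨ha, hb⟩, Or.inr ⟨ha, hb⟩, (hT a ha b hb hab).elim]

end Bipartition

section Goodness

variable {α : Type*} {γ : ℝ} {G H : SimpleGraph α} {u v w y z : α} {S U V : Set α}

lemma existsUnique_connectedComponent_and_eq_iff (huv : G.Adj u v) :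
    ((∃! c : G.ConnectedComponent, ∃ x y, G.Adj x y ∧ G.connectedComponentMk x = c) ∧
      {w | G.connectedComponentMk w = G.connectedComponentMk u} = S) ↔
      G.support ⊆ S ∧ ∀ w ∈ S, G.Reachable w u := by
  constructor
  · rintro ⟨hunique, rfl⟩
    refine ⟨?_, fun w hw ↦ ConnectedComponent.exact hw⟩
    rintro a ⟨b, hab⟩
    exact hunique.unique ⟨a, b, hab, rfl⟩ ⟨u, v, huv, rfl⟩
  · rintro ⟨hsupp, hreach⟩
    refine ⟨⟨_, ⟨u, v, huv, rfl⟩, ?_⟩, Set.Subset.antisymm (fun w hw ↦ ?_) fun w hw ↦ ?_⟩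
    · rintro _ ⟨a, b, hab, rfl⟩
      exact ConnectedComponent.sound (hreach a (hsupp hab.mem_support_left))
    · obtain rfl | hwu := eq_or_ne w u
      · exact hsupp huv.mem_support_left
      · exact hsupp (mem_support_of_reachable hwu (ConnectedComponent.exact hw))
    · exact ConnectedComponent.sound (hreach w hw)

lemma reachable_of_exists_adj_mem_neighborSet_union (huv : G.Adj u v)
    (hw : ∃ t ∈ G.neighborSet v ∪ G.neighborSet u, G.Adj w t) : G.Reachable w u := by
  obtain ⟨t, hvt | hut, hwt⟩ := hw
  · exact hwt.reachable.trans ((Adj.reachable hvt).symm.trans huv.reachable.symm)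
  · exact hwt.reachable.trans (Adj.reachable hut).symm

-- Connectedness is absent on the right because (2*) puts every vertex of `U ∪ V` within distance
-- three of `u`.
lemma gammaGood_iff_isBipartiteWith :
    GammaGood γ G u v U V ↔ G.Adj u v ∧ u ∈ U ∧ G.IsBipartiteWith U V ∧
      (∀ w ∈ U ∪ V, ∃ t ∈ G.neighborSet v ∪ G.neighborSet u, G.Adj w t) ∧
      bU γ G u U V ≤ 0 ∧ bV γ G v U V ≤ 0 ∧ bU γ G u U V + bV γ G v U V ≤ -2 := by
  constructor
  · rintro ⟨huv, hu, -, hdisj, hunique, hcomp, hU, hV, hdom, hb⟩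
    have hsupp := ((existsUnique_connectedComponent_and_eq_iff huv).1 ⟨hunique, hcomp⟩).1
    exact ⟨huv, hu, isBipartiteWith_iff_support_subset.2 ⟨hdisj, hsupp, hU, hV⟩, hdom, hb⟩
  · rintro ⟨huv, hu, hbip, hdom, hb⟩
    obtain ⟨hdisj, hsupp, hU, hV⟩ := isBipartiteWith_iff_support_subset.1 hbip
    obtain ⟨hunique, hcomp⟩ := (existsUnique_connectedComponent_and_eq_iff huv).2
      ⟨hsupp, fun w hw ↦ reachable_of_exists_adj_mem_neighborSet_union huv (hdom w hw)⟩
    exact ⟨huv, hu, hbip.mem_of_mem_adj hu huv, hdisj, hunique, hcomp, hU, hV, hdom, hb⟩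

lemma bV_eq_bU_swap : bV γ G v U V = bU γ G v V U := rfl

lemma neg_one_lt_bU (hcard : γ * V.ncard + 1 / (γ - 1) < U.ncard + 1) :
    -1 < bU γ G u U V := by
  have : (0 : ℝ) ≤ (V \ G.neighborSet u).ncard := Nat.cast_nonneg _
  unfold bU
  linarith

lemma subset_neighborSet_of_bU_nonpos (hV : V.Finite)
    (hcard : γ * V.ncard + 1 / (γ - 1) < U.ncard + 1) (hb : bU γ G u U V ≤ 0) :
    V ⊆ G.neighborSet u := by
  have hlt : ((V \ G.neighborSet u).ncard : ℝ) < 1 := by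
    unfold bU at hb
    linarith
  have hzero : (V \ G.neighborSet u).ncard = 0 := Nat.lt_one_iff.1 (by exact_mod_cast hlt)
  exact Set.sdiff_eq_empty.1 ((Set.ncard_eq_zero hV.sdiff).1 hzero)

lemma bU_insert_le_of_ncard_le {k : ℕ} (hV : V.Finite) (hz : z ∉ V)
    (hk : (insert z V \ H.neighborSet u).ncard ≤ (V \ G.neighborSet u).ncard + k) :
    bU γ H u (insert y U) (insert z V) ≤ bU γ G u U V + (k + 1 - γ) := by
  have hV₁ : ((insert z V \ H.neighborSet u).ncard : ℝ) ≤ (V \ G.neighborSet u).ncard + k := by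
    exact_mod_cast hk
  have hU : ((insert y U).ncard : ℝ) ≤ U.ncard + 1 := by exact_mod_cast Set.ncard_insert_le y U
  unfold bU
  rw [Set.ncard_insert_of_notMem hz hV]
  push_cast
  linarith

lemma bU_insert_le (hV : V.Finite) (hz : z ∉ V) (hGH : G ≤ H) :
    bU γ H u (insert y U) (insert z V) ≤ bU γ G u U V + (2 - γ) := by
  have hsub : insert z V \ H.neighborSet u ⊆ insert z (V \ G.neighborSet u) := by
    rintro a ⟨rfl | ha, haH⟩
    exacts [Or.inl rfl, Or.inr ⟨ha, fun haG ↦ haH (hGH haG)⟩]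
  have hk := (Set.ncard_le_ncard hsub (hV.sdiff.insert z)).trans (Set.ncard_insert_le _ _)
  refine (bU_insert_le_of_ncard_le hV hz hk).trans_eq ?_
  norm_num

lemma bU_insert_le_of_adj (hV : V.Finite) (hz : z ∉ V) (hGH : G ≤ H) (huz : H.Adj u z) :
    bU γ H u (insert y U) (insert z V) ≤ bU γ G u U V + (1 - γ) := by
  have hsub : insert z V \ H.neighborSet u ⊆ V \ G.neighborSet u := by
    rintro a ⟨rfl | ha, haH⟩
    exacts [(haH huz).elim, ⟨ha, fun haG ↦ haH (hGH haG)⟩]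
  refine (bU_insert_le_of_ncard_le (k := 0) hV hz (Set.ncard_le_ncard hsub hV.sdiff)).trans_eq ?_
  norm_num

lemma gammaGood_insert (hγ : 3 / 2 ≤ γ) (hg : GammaGood γ G u v U V) (hGH : G ≤ H)
    (hU : U.Finite) (hV : V.Finite) (hy : y ∉ U) (hz : z ∉ V)
    (hbip : H.IsBipartiteWith (insert y U) (insert z V)) (huz : H.Adj u z)
    (hyV : ∃ x ∈ V, H.Adj y x) (hcard : γ * V.ncard + 1 / (γ - 1) < U.ncard + 1) :
    GammaGood γ H u v (insert y U) (insert z V) := by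
  obtain ⟨huv, hu, -, hdom, hbU, -, hsum⟩ := gammaGood_iff_isBipartiteWith.1 hg
  obtain ⟨x, hx, hyx⟩ := hyV
  have hVu : V ⊆ G.neighborSet u := subset_neighborSet_of_bU_nonpos hV hcard hbU
  have hdomH : ∀ w ∈ insert y U ∪ insert z V,
      ∃ t ∈ H.neighborSet v ∪ H.neighborSet u, H.Adj w t := by
    rw [Set.insert_union, Set.union_insert, Set.forall_mem_insert, Set.forall_mem_insert]
    refine ⟨⟨x, Or.inr (hGH (hVu hx)), hyx⟩, ⟨u, Or.inl (hGH huv.symm), huz.symm⟩, fun w hw ↦ ?_⟩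
    obtain ⟨t, ht, hwt⟩ := hdom w hw
    exact ⟨t, ht.imp (@hGH _ _) (@hGH _ _), hGH hwt⟩
  have hbU_low : -1 < bU γ G u U V := neg_one_lt_bU hcard
  have hbU_le : bU γ H u (insert y U) (insert z V) ≤ bU γ G u U V + (1 - γ) :=
    bU_insert_le_of_adj hV hz hGH huz
  have hbV_le : bV γ H v (insert y U) (insert z V) ≤ bV γ G v U V + (2 - γ) := by
    simpa only [bV_eq_bU_swap] using bU_insert_le hU hy hGH
  exact gammaGood_iff_isBipartiteWith.2 ⟨hGH huv, Set.mem_insert_of_mem y hu, hbip, hdomH,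
    by linarith, by linarith, by linarith⟩

end Goodness

theorem stmt_18_general {α : Type*} {γ : ℝ} (hγ : 3 / 2 ≤ γ)
    (G : SimpleGraph α) (u v : α) (U V : Set α) (hU : U.Finite) (hV : V.Finite)
    (hg : GammaGood γ G u v U V)
    (x y : α) (hx : x ∈ V) (hy : y ∉ U ∪ V)
    (hov : (U.ncard : ℝ) + 1 > γ * V.ncard + 1 / (γ - 1))
    (z : α) (hz : (addEdge G x y).neighborSet z = ∅) :
    GammaGood γ (addEdge (addEdge G x y) z u) u v (U ∪ {y}) (V ∪ {z}) := by
  obtain ⟨-, hu, hbip, hdom, -⟩ := gammaGood_iff_isBipartiteWith.1 hg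
  have hisol : (addEdge G x y).IsIsolated z := (neighborSet_eq_empty _).1 hz
  have hxy : (addEdge G x y).Adj x y := addEdge_adj_self fun h ↦ hy (Or.inr (h ▸ hx))
  have hzy : z ≠ y := fun h ↦ hisol x (h ▸ hxy.symm)
  have hzUV : z ∉ U ∪ V := fun hmem ↦
    let ⟨t, _, hzt⟩ := hdom z hmem
    hisol t (le_sup_left (a := G) hzt)
  have hzu : (addEdge (addEdge G x y) z u).Adj z u :=
    addEdge_adj_self fun h ↦ hzUV (Or.inl (h ▸ hu))
  rw [Set.mem_union, not_or] at hy hzUV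
  have hdisj : Disjoint (insert y U) (insert z V) := by
    simp [hbip.disjoint, hy.2, hzUV.1, hzy]
  have hbip_enlarged : G.IsBipartiteWith (insert y U) (insert z V) :=
    isBipartiteWith_mono hbip (Set.subset_insert y U) (Set.subset_insert z V) hdisj
  have hbip_added : (addEdge (addEdge G x y) z u).IsBipartiteWith (insert y U) (insert z V) :=
    (isBipartiteWith_addEdge (isBipartiteWith_addEdge hbip_enlarged.symm (Or.inr hx) (Or.inl rfl))
      (Or.inl rfl) (Or.inr hu)).symm
  rw [Set.union_singleton, Set.union_singleton]
  exact gammaGood_insert hγ hg (le_sup_left.trans le_sup_left) hU hV hy.1 hzUV.2 hbip_added hzu.symm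
    ⟨x, hx, le_sup_left (a := addEdge G x y) hxy.symm⟩ hov

theorem stmt_18 {α : Type*} [Fintype α]
    (G : SimpleGraph α) (u v : α) (U V : Set α)
    (hg : GammaGood (3 / 2) G u v U V)
    (x y : α) (hx : x ∈ V) (hy : y ∉ U ∪ V)
    (hov : (U.ncard : ℝ) + 1 > (3 / 2) * V.ncard + 2)
    (z : α) (hz : (addEdge G x y).neighborSet z = ∅) :
    GammaGood (3 / 2) (addEdge (addEdge G x y) z u) u v (U ∪ {y}) (V ∪ {z}) :=
  stmt_18_general le_rfl G u v U V U.toFinite V.toFinite hg x y hx hy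
    (by linarith) z hz
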